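/- Let A be an infinite set of positive integers and let k ≥ 2 be an integer. Then the function assigning to each positive integer n the number of ordered k-tuples (a_1,...,a_k) with all a_i ∈ A and a_1 + ... + a_k = n is not eventually constant: for every constant c and every N there exists n > N for which this count differs from c. -/

import Mathlib

/-- The `k`-fold representation function: the number of ordered `k`-tuples of
elements of `A` summing to `n`. -/
noncomputable def reprFnFold (A : Set ℕ) (k : ℕ) (n : ℕ) : ℕ :=
  Nat.card {a : Fin k → ℕ // (∀ i, a i ∈ A) ∧ ∑ i, a i = n}

/-!
Let `F = ∑_{a ∈ A} X ^ a`, so that the representation function lists the coefficients of `F ^ k`.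

For `k` prime, in particular `k = 2`, Frobenius gives `F ^ k ≡ F(X ^ k) mod k`, so the count is `1`
mod `k` at `k * a` for every `a ∈ A` and `0` mod `k` off the multiples of `k`.

For `k > 2`, if the count is eventually constant then `(1 - z) F(z) ^ k` is a polynomial, so on the
unit circle `|F(rz)| ^ 2` is at most a constant times `|1 - z| ^ (-2 / k)`, uniformly in `r < 1`.
As `2 / k < 1` this majorant is integrable, and Parseval's identity bounds `∑_{a ∈ A} r ^ (2a)`
uniformly in `r < 1`, which forces `A` to be finite.
-/

section Evaluation

open PowerSeries Filter Topology

variable {R : Type*}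

lemma exists_polynomial_eq_one_sub_X_mul [Ring R] {p : R⟦X⟧}
    (hp : EventuallyConst (fun n ↦ coeff n p) atTop) :
    ∃ P : Polynomial R, (P : R⟦X⟧) = (1 - X) * p := by
  obtain ⟨N, hN⟩ := eventuallyConst_atTop_nat.1 hp
  refine ⟨trunc (N + 1) ((1 - X) * p), ext fun n ↦ ?_⟩
  rw [Polynomial.coeff_coe, coeff_trunc]
  split_ifs with hn
  · rfl
  · obtain ⟨m, rfl⟩ : ∃ m, n = m + 1 := ⟨n - 1, by lia⟩
    rw [sub_mul, one_mul, map_sub, coeff_succ_X_mul, hN m (by lia), sub_self]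

/-- The power series `p` converges absolutely at `z`: `∑ ‖aₙ zⁿ‖ < ∞`. -/
def AbsConvergesAt [NormedCommRing R] (p : R⟦X⟧) (z : R) : Prop :=
  Summable fun n ↦ ‖coeff n p * z ^ n‖

/-- The value `∑ aₙ zⁿ` of the power series `p` at `z`, meaningful where the series converges.
Mathlib's evaluation of power series requires a linear topology and does not apply over `ℂ`. -/
noncomputable def evalTsum [NormedCommRing R] (p : R⟦X⟧) (z : R) : R :=
  ∑' n, coeff n p * z ^ n

section NormedCommRing

variable [NormedCommRing R] {p q : R⟦X⟧} {z : R}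

lemma coeff_polynomial_mul_pow_eq_zero (P : Polynomial R) (z : R) {n : ℕ} (hn : n ∉ P.support) :
    coeff n (P : R⟦X⟧) * z ^ n = 0 := by
  rw [Polynomial.coeff_coe, Polynomial.notMem_support_iff.1 hn, zero_mul]

lemma absConvergesAt_polynomial (P : Polynomial R) (z : R) : AbsConvergesAt (P : R⟦X⟧) z :=
  summable_of_ne_finset_zero (s := P.support) fun n hn ↦ by
    rw [coeff_polynomial_mul_pow_eq_zero P z hn, norm_zero]

lemma evalTsum_polynomial (P : Polynomial R) (z : R) : evalTsum (P : R⟦X⟧) z = P.eval z := by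
  rw [evalTsum, tsum_eq_sum fun n hn ↦ coeff_polynomial_mul_pow_eq_zero P z hn,
    Polynomial.eval_eq_sum, Polynomial.sum]
  simp only [Polynomial.coeff_coe]

lemma coeff_mul_mul_pow (p q : R⟦X⟧) (z : R) (n : ℕ) :
    coeff n (p * q) * z ^ n =
      ∑ ij ∈ Finset.HasAntidiagonal.antidiagonal n,
        coeff ij.1 p * z ^ ij.1 * (coeff ij.2 q * z ^ ij.2) := by
  rw [coeff_mul, Finset.sum_mul]
  refine Finset.sum_congr rfl fun ij hij ↦ ?_
  rw [← Finset.HasAntidiagonal.mem_antidiagonal.1 hij, pow_add]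
  ring

lemma AbsConvergesAt.mul (hp : AbsConvergesAt p z) (hq : AbsConvergesAt q z) :
    AbsConvergesAt (p * q) z := by
  simpa only [AbsConvergesAt, coeff_mul_mul_pow] using
    summable_norm_sum_mul_antidiagonal_of_summable_norm hp hq

lemma evalTsum_mul [CompleteSpace R] (hp : AbsConvergesAt p z) (hq : AbsConvergesAt q z) :
    evalTsum (p * q) z = evalTsum p z * evalTsum q z := by
  simpa only [evalTsum, coeff_mul_mul_pow] using
    (tsum_mul_tsum_eq_tsum_sum_antidiagonal_of_summable_norm hp hq).symm

lemma AbsConvergesAt.pow (hp : AbsConvergesAt p z) (k : ℕ) : AbsConvergesAt (p ^ k) z := by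
  induction k with
  | zero => simpa only [pow_zero, Polynomial.coe_one] using absConvergesAt_polynomial 1 z
  | succ k ih => simpa only [pow_succ] using ih.mul hp

lemma evalTsum_pow [CompleteSpace R] (hp : AbsConvergesAt p z) (k : ℕ) :
    evalTsum (p ^ k) z = evalTsum p z ^ k := by
  induction k with
  | zero =>
    simpa only [pow_zero, Polynomial.coe_one, Polynomial.eval_one] using evalTsum_polynomial 1 z
  | succ k ih => rw [pow_succ, evalTsum_mul (hp.pow k) hp, ih, pow_succ]

lemma absConvergesAt_rescale (p : R⟦X⟧) (r z : R) :
    AbsConvergesAt (rescale r p) z ↔ AbsConvergesAt p (r * z) := by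
  simp only [AbsConvergesAt, coeff_rescale, mul_pow, mul_left_comm, mul_assoc]

lemma evalTsum_rescale (p : R⟦X⟧) (r z : R) :
    evalTsum (rescale r p) z = evalTsum p (r * z) := by
  simp only [evalTsum, coeff_rescale, mul_pow, mul_left_comm, mul_assoc]

lemma tendsto_eval_trunc [CompleteSpace R] (hp : AbsConvergesAt p z) :
    Tendsto (fun N ↦ (trunc N p).eval z) atTop (𝓝 (evalTsum p z)) := by
  simpa only [Polynomial.eval, eval₂_trunc_eq_sum_range, RingHom.id_apply, evalTsum] using
    hp.of_norm.hasSum.tendsto_sum_nat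

lemma norm_eval_trunc_le (hp : AbsConvergesAt p z) (N : ℕ) :
    ‖(trunc N p).eval z‖ ≤ ∑' n, ‖coeff n p * z ^ n‖ := by
  rw [Polynomial.eval, eval₂_trunc_eq_sum_range]
  exact (norm_sum_le _ _).trans (hp.sum_le_tsum _ fun _ _ ↦ norm_nonneg _)

end NormedCommRing

section NormedField

variable [NormedField R] {p : R⟦X⟧}

lemma absConvergesAt_iff_of_norm_eq {z w : R} (h : ‖z‖ = ‖w‖) :
    AbsConvergesAt p z ↔ AbsConvergesAt p w := by
  simp only [AbsConvergesAt, norm_mul, norm_pow, h]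

lemma AbsConvergesAt.continuousOn_evalTsum [CompleteSpace R] {w : R} (hp : AbsConvergesAt p w) :
    ContinuousOn (evalTsum p) (Metric.closedBall 0 ‖w‖) :=
  continuousOn_tsum (fun n ↦ by fun_prop) hp fun n z hz ↦ by
    rw [norm_mul, norm_mul, norm_pow, norm_pow]
    gcongr
    exact mem_closedBall_zero_iff.1 hz

lemma exists_norm_one_sub_mul_evalTsum_le [ProperSpace R]
    (hp : EventuallyConst (fun n ↦ coeff n p) atTop) :
    ∃ B, ∀ z, ‖z‖ ≤ 1 → AbsConvergesAt p z → ‖1 - z‖ * ‖evalTsum p z‖ ≤ B := by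
  obtain ⟨P, hP⟩ := exists_polynomial_eq_one_sub_X_mul hp
  obtain ⟨B, hB⟩ := (isCompact_closedBall (0 : R) 1).exists_bound_of_continuousOn
    P.continuous.continuousOn
  refine ⟨B, fun z hz hpz ↦ ?_⟩
  have one_sub_X : ((1 - Polynomial.X : Polynomial R) : R⟦X⟧) = 1 - X := by simp
  have key : P.eval z = (1 - z) * evalTsum p z := by
    rw [← evalTsum_polynomial, hP, ← one_sub_X,
      evalTsum_mul (absConvergesAt_polynomial _ z) hpz, evalTsum_polynomial]
    simp
  rw [← norm_mul, ← key]
  exact hB z (mem_closedBall_zero_iff.2 hz)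

end NormedField

end Evaluation

section Hardy

open PowerSeries Filter MeasureTheory Real Topology

variable {p : ℂ⟦X⟧}

lemma circleAverage_sq_norm_eval_trunc (p : ℂ⟦X⟧) (N : ℕ) :
    circleAverage (fun z ↦ ‖(trunc N p).eval z‖ ^ 2) 0 1 =
      ∑ n ∈ Finset.range N, ‖coeff n p‖ ^ 2 := by
  have support_subset : (trunc N p).support ⊆ Finset.range N := fun n hn ↦ by
    by_contra h
    exact Polynomial.mem_support_iff.1 hn (by rw [coeff_trunc, if_neg (by simpa using h)])
  rw [← Polynomial.sum_sq_norm_coeff_eq_circleAverage, Finset.sum_subset support_subset]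
  · refine Finset.sum_congr rfl fun n hn ↦ ?_
    rw [coeff_trunc, if_pos (Finset.mem_range.1 hn)]
  · intro n _ hn
    rw [Polynomial.notMem_support_iff.1 hn, norm_zero, zero_pow two_ne_zero]

lemma hasSum_sq_norm_coeff (hp : AbsConvergesAt p 1) :
    HasSum (fun n ↦ ‖coeff n p‖ ^ 2) (circleAverage (fun z ↦ ‖evalTsum p z‖ ^ 2) 0 1) := by
  rw [hasSum_iff_tendsto_nat_of_nonneg fun n ↦ by positivity]
  simp only [← circleAverage_sq_norm_eval_trunc]
  have hp' (θ : ℝ) : AbsConvergesAt p (circleMap 0 1 θ) :=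
    (absConvergesAt_iff_of_norm_eq (by simp)).2 hp
  refine (intervalIntegral.tendsto_integral_filter_of_dominated_convergence
    (fun _ ↦ (∑' n, ‖coeff n p * 1 ^ n‖) ^ 2) (.of_forall fun N ↦ ?_)
    (.of_forall fun N ↦ .of_forall fun θ _ ↦ ?_) intervalIntegrable_const
    (.of_forall fun θ _ ↦ ?_)).const_smul _
  · exact Continuous.aestronglyMeasurable (by fun_prop)
  · rw [norm_pow, norm_norm]
    gcongr
    simpa using norm_eval_trunc_le (hp' θ) N
  · exact (tendsto_eval_trunc (hp' θ)).norm.pow 2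

lemma hasSum_sq_norm_coeff_mul_pow {r : ℝ} (hp : AbsConvergesAt p r) :
    HasSum (fun n ↦ ‖coeff n p‖ ^ 2 * r ^ (2 * n))
      (circleAverage (fun z ↦ ‖evalTsum p z‖ ^ 2) 0 r) := by
  have term (n : ℕ) : ‖coeff n p‖ ^ 2 * r ^ (2 * n) = ‖coeff n (rescale (r : ℂ) p)‖ ^ 2 := by
    rw [coeff_rescale, norm_mul, norm_pow, Complex.norm_real, norm_eq_abs, mul_pow, pow_right_comm,
      sq_abs, ← pow_mul, mul_comm]
  rw [circleAverage_eq_circleAverage_zero_one]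
  simp only [term, add_zero, ← evalTsum_rescale]
  exact hasSum_sq_norm_coeff ((absConvergesAt_rescale p (r : ℂ) 1).2 (by rwa [mul_one]))

lemma summable_sq_norm_coeff_of_circleAverage_le {C : ℝ}
    (hp : ∀ z : ℂ, ‖z‖ < 1 → AbsConvergesAt p z)
    (hC : ∀ r ∈ Set.Ioo (0 : ℝ) 1, circleAverage (fun z ↦ ‖evalTsum p z‖ ^ 2) 0 r ≤ C) :
    Summable fun n ↦ ‖coeff n p‖ ^ 2 := by
  refine summable_of_sum_le (c := C) (fun n ↦ by positivity) fun S ↦ ?_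
  have tends : Tendsto (fun r : ℝ ↦ ∑ n ∈ S, ‖coeff n p‖ ^ 2 * r ^ (2 * n)) (𝓝[<] 1)
      (𝓝 (∑ n ∈ S, ‖coeff n p‖ ^ 2)) := by
    refine tendsto_nhdsWithin_of_tendsto_nhds (Continuous.tendsto' (by fun_prop) _ _ ?_)
    simp
  refine le_of_tendsto tends ?_
  filter_upwards [Ioo_mem_nhdsLT (zero_lt_one' ℝ)] with r hr
  have hpr : AbsConvergesAt p (r : ℂ) := hp r (by simpa [abs_of_pos hr.1] using hr.2)
  exact (sum_le_hasSum S (fun n _ ↦ by have := hr.1; positivity)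
    (hasSum_sq_norm_coeff_mul_pow hpr)).trans (hC r hr)

end Hardy

section CircleEstimates

open Real MeasureTheory

lemma norm_sub_le_two_mul_norm_sub_smul {E : Type*} [SeminormedAddCommGroup E] [NormedSpace ℝ E]
    {x y : E} (hxy : ‖x‖ = ‖y‖) {r : ℝ} (hr : 0 ≤ r) : ‖x - y‖ ≤ 2 * ‖x - r • y‖ := by
  have radial : ‖r • y - y‖ ≤ ‖x - r • y‖ := calc
    ‖r • y - y‖ = ‖(r - 1) • y‖ := by rw [sub_smul, one_smul]
    _ = |‖r • y‖ - ‖x‖| := by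
      rw [norm_smul, norm_smul, hxy, norm_of_nonneg hr, norm_eq_abs, ← sub_one_mul, abs_mul,
        abs_norm]
    _ ≤ ‖x - r • y‖ := by rw [norm_sub_rev]; exact abs_norm_sub_norm_le _ _
  calc ‖x - y‖ ≤ ‖x - r • y‖ + ‖r • y - y‖ := norm_sub_le_norm_sub_add_norm_sub _ _ _
    _ ≤ 2 * ‖x - r • y‖ := by linarith

lemma norm_one_sub_circleMap (θ : ℝ) : ‖1 - circleMap 0 1 θ‖ = 2 * |sin (θ / 2)| := by
  rw [norm_sub_rev, circleMap_zero, mul_comm (θ : ℂ), Complex.ofReal_one, one_mul,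
    Complex.norm_exp_I_mul_ofReal_sub_one, norm_mul, norm_two, norm_eq_abs]

lemma two_div_pi_mul_abs_le_norm_one_sub_circleMap {θ : ℝ} (hθ : |θ| ≤ π) :
    2 / π * |θ| ≤ ‖1 - circleMap 0 1 θ‖ := by
  have half : |θ / 2| ≤ π / 2 := by rw [abs_div, abs_two]; linarith
  calc 2 / π * |θ| = 2 * (2 / π * |θ / 2|) := by rw [abs_div, abs_two]; ring
    _ ≤ 2 * |sin (θ / 2)| := by gcongr; exact mul_abs_le_abs_sin half
    _ = ‖1 - circleMap 0 1 θ‖ := (norm_one_sub_circleMap θ).symm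

lemma intervalIntegrable_abs_rpow {s : ℝ} (hs : -1 < s) (a b : ℝ) :
    IntervalIntegrable (fun x ↦ |x| ^ s) volume a b := by
  refine intervalIntegrable_of_even (fun x ↦ by rw [abs_neg]) fun x hx ↦ ?_
  refine (intervalIntegral.intervalIntegrable_rpow' hs).congr fun y hy ↦ ?_
  rw [Set.uIoc_of_le hx.le] at hy
  rw [abs_of_pos hy.1]

lemma circleIntegrable_norm_one_sub_rpow {s : ℝ} (hs : -1 < s) :
    CircleIntegrable (fun z : ℂ ↦ ‖1 - z‖ ^ s) 0 1 := by
  rcases le_total 0 s with hs0 | hs0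
  · exact ContinuousOn.circleIntegrable' (by fun_prop (disch := simp [hs0]))
  have periodic : Function.Periodic (fun θ ↦ ‖1 - circleMap 0 1 θ‖ ^ s) (2 * π) := fun θ ↦
    congrArg (fun z ↦ ‖1 - z‖ ^ s) (periodic_circleMap 0 1 θ)
  refine periodic.intervalIntegrable (t := -π) two_pi_pos.ne' ?_ 0 (2 * π)
  rw [show -π + 2 * π = π by ring]
  refine ((intervalIntegrable_abs_rpow hs (-π) π).const_mul ((2 / π) ^ s)).mono_fun'
    (Measurable.aestronglyMeasurable (by fun_prop)) ?_
  filter_upwards [ae_restrict_mem measurableSet_uIoc, ae_restrict_of_ae (Measure.ae_ne _ 0)]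
    with θ hθ hθ0
  rw [Set.uIoc_of_le (by linarith [pi_pos])] at hθ
  rw [← mul_rpow (by positivity) (abs_nonneg θ), norm_of_nonneg (by positivity)]
  exact rpow_le_rpow_of_nonpos (by positivity)
    (two_div_pi_mul_abs_le_norm_one_sub_circleMap (abs_le.2 ⟨hθ.1.le, hθ.2⟩)) hs0

lemma circleAverage_mono_of_Ioo {f g : ℂ → ℝ} {c : ℂ} {R : ℝ} (hf : CircleIntegrable f c R)
    (hg : CircleIntegrable g c R)
    (h : ∀ θ ∈ Set.Ioo 0 (2 * π), f (circleMap c R θ) ≤ g (circleMap c R θ)) :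
    circleAverage f c R ≤ circleAverage g c R := by
  simp only [circleAverage_def, smul_eq_mul]
  gcongr
  exact intervalIntegral.integral_mono_on_of_le_Ioo two_pi_pos.le hf hg h

lemma sq_le_mul_rpow_of_mul_pow_le {y d B : ℝ} {k : ℕ} (hk : k ≠ 0) (hy : 0 ≤ y) (hd : 0 < d)
    (h : d * y ^ k ≤ B) : y ^ 2 ≤ B ^ (2 / k : ℝ) * d ^ (-(2 / k) : ℝ) := by
  have hB : 0 ≤ B := le_trans (by positivity) h
  calc y ^ 2 = (y ^ k) ^ (2 / k : ℝ) := by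
        rw [← rpow_natCast_mul hy, mul_div_cancel₀ _ (Nat.cast_ne_zero.2 hk), rpow_two]
    _ ≤ (B / d) ^ (2 / k : ℝ) := by gcongr; rwa [le_div_iff₀' hd]
    _ = B ^ (2 / k : ℝ) * d ^ (-(2 / k) : ℝ) := by rw [div_rpow hB hd.le, rpow_neg hd.le]; rfl

end CircleEstimates

section Growth

open PowerSeries Filter Real

lemma summable_sq_norm_coeff_of_eventuallyConst_coeff_pow {p : ℂ⟦X⟧} {k : ℕ} (hk : 2 < k)
    (hp : ∀ z : ℂ, ‖z‖ < 1 → AbsConvergesAt p z)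
    (hpk : EventuallyConst (fun n ↦ coeff n (p ^ k)) atTop) :
    Summable fun n ↦ ‖coeff n p‖ ^ 2 := by
  obtain ⟨B, hB⟩ := exists_norm_one_sub_mul_evalTsum_le hpk
  set s : ℝ := 2 / k
  have hs : s < 1 := (div_lt_one (by positivity)).2 (by exact_mod_cast hk)
  refine summable_sq_norm_coeff_of_circleAverage_le
    (C := circleAverage (fun z ↦ (2 * B) ^ s * ‖1 - z‖ ^ (-s)) 0 1) hp fun r ⟨hr0, hr1⟩ ↦ ?_
  have norm_mul_circleMap (θ : ℝ) : ‖(r : ℂ) * circleMap 0 1 θ‖ < 1 := by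
    simpa [abs_of_pos hr0] using hr1
  have cont : CircleIntegrable (fun z ↦ ‖evalTsum p (r * z + 0)‖ ^ 2) 0 1 := by
    refine ContinuousOn.circleIntegrable zero_le_one (.pow (.norm ?_) 2)
    refine (hp r (by simpa using norm_mul_circleMap 0)).continuousOn_evalTsum.comp (by fun_prop)
      fun z hz ↦ ?_
    rw [mem_sphere_zero_iff_norm] at hz
    simp [hz]
  rw [circleAverage_eq_circleAverage_zero_one]
  -- The angle `0` is left out: at `z = 1` the majorant has the junk value `0 ^ (-s) = 0`.
  refine circleAverage_mono_of_Ioo cont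
    ((circleIntegrable_norm_one_sub_rpow (by linarith)).const_mul _) fun θ hθ ↦ ?_
  set z := circleMap 0 1 θ
  have hz : ‖(1 : ℂ)‖ = ‖z‖ := by simp [z]
  have hz1 : 0 < ‖1 - z‖ := by
    rw [norm_one_sub_circleMap]
    have := sin_pos_of_pos_of_lt_pi (half_pos hθ.1) (by linarith [hθ.2])
    positivity
  have key : ‖1 - z‖ * ‖evalTsum p (r * z)‖ ^ k ≤ 2 * B := calc
    _ ≤ 2 * ‖1 - r • z‖ * ‖evalTsum p (r * z)‖ ^ k := by
      gcongr; exact norm_sub_le_two_mul_norm_sub_smul hz hr0.le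
    _ = 2 * (‖1 - r * z‖ * ‖evalTsum (p ^ k) (r * z)‖) := by
      rw [evalTsum_pow (hp _ (norm_mul_circleMap θ)), norm_pow, Complex.real_smul, mul_assoc]
    _ ≤ 2 * B := by
      gcongr
      exact hB _ (norm_mul_circleMap θ).le ((hp _ (norm_mul_circleMap θ)).pow k)
  rw [add_zero]
  exact sq_le_mul_rpow_of_mul_pow_le (by positivity) (norm_nonneg _) hz1 key

end Growth

section Representations

open PowerSeries Filter

/-- The generating series `∑_{a ∈ A} X ^ a` of a set `A` of natural numbers; its `k`-th power is
the generating series of `reprFnFold A k`. -/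
noncomputable def indicatorSeries (R : Type*) [Semiring R] (A : Set ℕ) : R⟦X⟧ :=
  mk (A.indicator 1)

lemma coeff_indicatorSeries (R : Type*) [Semiring R] (A : Set ℕ) (n : ℕ) :
    coeff n (indicatorSeries R A) = A.indicator 1 n :=
  coeff_mk _ _

lemma coeff_indicatorSeries_pow (R : Type*) [CommSemiring R] (A : Set ℕ) (k n : ℕ) :
    coeff n (indicatorSeries R A ^ k) = reprFnFold A k n := by
  classical
  have coeff_prod_indicator (l : Fin k →₀ ℕ) :
      ∏ i, coeff (l i) (indicatorSeries R A) = if ∀ i, l i ∈ A then 1 else 0 := by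
    simp [coeff_indicatorSeries, Set.indicator_apply, Finset.prod_ite_zero]
  rw [← Fin.prod_const, coeff_prod, Finset.sum_congr rfl fun l _ ↦ coeff_prod_indicator l,
    Finset.sum_boole, reprFnFold, ← Nat.card_eq_finsetCard]
  congr 1
  refine Nat.card_congr (Finsupp.equivFunOnFinite.subtypeEquiv fun l ↦ ?_)
  simp [Finset.mem_finsuppAntidiag, and_comm]

lemma natCast_reprFnFold_prime (A : Set ℕ) (p : ℕ) [Fact p.Prime] (n : ℕ) :
    (reprFnFold A p n : ZMod p) = if p ∣ n then A.indicator 1 (n / p) else 0 := by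
  have hp : p ≠ 0 := (Fact.out : p.Prime).ne_zero
  have frobenius : indicatorSeries (ZMod p) A ^ p = (indicatorSeries (ZMod p) A).expand p hp := by
    have := MvPowerSeries.map_frobenius_expand p hp (f := indicatorSeries (ZMod p) A)
    rw [ZMod.frobenius_zmod, MvPowerSeries.map_id, RingHom.id_apply] at this
    exact this.symm
  rw [← coeff_indicatorSeries_pow, frobenius, coeff_expand, coeff_indicatorSeries]

lemma not_eventuallyConst_reprFnFold_prime {A : Set ℕ} (hA : A.Infinite) {p : ℕ}
    (hp : p.Prime) : ¬ EventuallyConst (reprFnFold A p) atTop := by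
  have := Fact.mk hp
  intro h
  obtain ⟨N, hN⟩ := eventuallyConst_atTop.1 h
  obtain ⟨a, haA, ha⟩ := hA.exists_gt N
  have ha_le : a ≤ p * a := Nat.le_mul_of_pos_left a hp.pos
  have hmul : (reprFnFold A p (p * a) : ZMod p) = 1 := by
    rw [natCast_reprFnFold_prime, if_pos (dvd_mul_right p a), Nat.mul_div_cancel_left a hp.pos,
      Set.indicator_of_mem haA, Pi.one_apply]
  have hsucc : (reprFnFold A p (p * a + 1) : ZMod p) = 0 := by
    have not_dvd : ¬ p ∣ p * a + 1 := fun hdvd ↦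
      hp.not_dvd_one ((Nat.dvd_add_right (dvd_mul_right p a)).1 hdvd)
    rw [natCast_reprFnFold_prime, if_neg not_dvd]
  rw [hN _ (by lia), ← hN (p * a) (by lia), hmul] at hsucc
  exact one_ne_zero hsucc

lemma absConvergesAt_indicatorSeries (A : Set ℕ) {z : ℂ} (hz : ‖z‖ < 1) :
    AbsConvergesAt (indicatorSeries ℂ A) z := by
  refine .of_nonneg_of_le (fun _ ↦ norm_nonneg _) (fun n ↦ ?_)
    (summable_geometric_of_lt_one (norm_nonneg z) hz)
  rw [coeff_indicatorSeries, norm_mul, norm_pow]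
  exact mul_le_of_le_one_left (by positivity)
    ((norm_indicator_le_norm_self _ _).trans_eq (by simp))

lemma not_eventuallyConst_reprFnFold_of_two_lt {A : Set ℕ} (hA : A.Infinite) {k : ℕ}
    (hk : 2 < k) : ¬ EventuallyConst (reprFnFold A k) atTop := by
  intro h
  have hpow : EventuallyConst (fun n ↦ coeff n (indicatorSeries ℂ A ^ k)) atTop := by
    simpa only [coeff_indicatorSeries_pow, Function.comp_def] using h.comp (Nat.cast : ℕ → ℂ)
  have summable_sq := summable_sq_norm_coeff_of_eventuallyConst_coeff_pow hk
    (fun _ hz ↦ absConvergesAt_indicatorSeries A hz) hpow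
  have sq_eq : (fun n ↦ ‖coeff n (indicatorSeries ℂ A)‖ ^ 2) = A.indicator fun _ ↦ (1 : ℝ) := by
    ext n
    by_cases hn : n ∈ A <;> simp [coeff_indicatorSeries, hn]
  rw [sq_eq, ← summable_subtype_iff_indicator] at summable_sq
  have := hA.to_subtype
  exact one_ne_zero ((summable_const_iff (1 : ℝ)).1 summable_sq)

theorem stmt2_general {A : Set ℕ} (hA : A.Infinite) {k : ℕ} (hk : 2 ≤ k) (c N : ℕ) :
    ∃ n > N, reprFnFold A k n ≠ c := by
  by_contra! h
  have hconst : EventuallyConst (reprFnFold A k) atTop :=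
    eventuallyConst_iff_exists_eventuallyEq.2 ⟨c, (eventually_gt_atTop N).mono h⟩
  rcases hk.eq_or_lt with rfl | hk
  · exact not_eventuallyConst_reprFnFold_prime hA Nat.prime_two hconst
  · exact not_eventuallyConst_reprFnFold_of_two_lt hA hk hconst

end Representations

theorem stmt2 (A : Set ℕ) (hA : A.Infinite) (hApos : ∀ a ∈ A, 0 < a)
    (k : ℕ) (hk : 2 ≤ k) :
    ∀ (c : ℕ) (N : ℕ), ∃ n > N, reprFnFold A k n ≠ c :=
  stmt2_general hA hk
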